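/- Let Z^{6⁴}(τ,z) = 2·(η(τ)²η(2τ)²η(3τ)²/η(6τ)²)·φ_{−2,1}(τ,z) be the twined elliptic genus for the M₂₄ class 6b. Then for all τ ∈ ℍ and z ∈ ℂ, the sum of the slashes of Z^{6⁴} by M_{1/6} = (1,0;6,1) and M_{5/6} = (5,−1;6,−1) (representing the two width-one cusps 1/6 and 5/6 of Γ₀(36)) equals +Z^{6⁴}: exp(−12πi z²/(6τ+1))·Z^{6⁴}( τ/(6τ+1), z/(6τ+1) ) + exp(−12πi z²/(6τ−1))·Z^{6⁴}( (5τ−1)/(6τ−1), z/(6τ−1) ) = Z^{6⁴}(τ,z). -/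

import Mathlib

open Complex


/-- The Dedekind eta function. -/
noncomputable def Eta (τ : ℂ) : ℂ :=
  Complex.exp (Real.pi * I * τ / 12) *
    ∏' n : ℕ, (1 - Complex.exp (2 * Real.pi * I * ((n : ℂ) + 1) * τ))

noncomputable def θ₁ (τ z : ℂ) : ℂ :=
  -I * ∑' n : ℤ, (-1 : ℂ) ^ n *
    Complex.exp (Real.pi * I * ((n : ℂ) + 1 / 2) ^ 2 * τ + (2 * (n : ℂ) + 1) * Real.pi * I * z)

noncomputable def θ₂ (τ z : ℂ) : ℂ :=
  ∑' n : ℤ,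
    Complex.exp (Real.pi * I * ((n : ℂ) + 1 / 2) ^ 2 * τ + (2 * (n : ℂ) + 1) * Real.pi * I * z)

noncomputable def θ₃ (τ z : ℂ) : ℂ :=
  ∑' n : ℤ, Complex.exp (Real.pi * I * (n : ℂ) ^ 2 * τ + 2 * (n : ℂ) * Real.pi * I * z)

noncomputable def θ₄ (τ z : ℂ) : ℂ :=
  ∑' n : ℤ, (-1 : ℂ) ^ n *
    Complex.exp (Real.pi * I * (n : ℂ) ^ 2 * τ + 2 * (n : ℂ) * Real.pi * I * z)

/-- The weak Jacobi form φ_{0,1}. -/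
noncomputable def φ01 (τ z : ℂ) : ℂ :=
  4 * ((θ₂ τ z / θ₂ τ 0) ^ 2 + (θ₃ τ z / θ₃ τ 0) ^ 2 + (θ₄ τ z / θ₄ τ 0) ^ 2)

/-- The weak Jacobi form φ_{−2,1}. -/
noncomputable def φm21 (τ z : ℂ) : ℂ := θ₁ τ z ^ 2 / Eta τ ^ 6

/-- Twined elliptic genus for the class 6b (cycle shape 6^4). -/
noncomputable def Z6b (τ z : ℂ) : ℂ :=
  2 * (Eta τ ^ 2 * Eta (2 * τ) ^ 2 * Eta (3 * τ) ^ 2 / Eta (6 * τ) ^ 2) * φm21 τ z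

/-!
The weak Jacobi form `φ_{−2,1} = θ₁² / η⁶` is invariant under all of `SL₂(ℤ)`, because `θ₁²` and
`η⁶` pick up the same root of unity under both `S` and `T`. So the weight `0`, index `1` slash acts
on `Z^{6⁴}` only through its weight `2` eta quotient. As `(1,0;m,1) = S T⁻ᵐ S⁻¹`, the function
`η(nτ)²` is multiplied by `e^{−πim/6}` under `(1,0;nm,1)`. Hence `M_{1/6} = (1,0;6,1)` multiplies
the eta quotient by `e^{πi/3}`, while `M_{5/6} = −T (1,0;−6,1)` multiplies it by `e^{−πi/3}`, and
`e^{πi/3} + e^{−πi/3} = 1`.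
-/

open UpperHalfPlane hiding I
open ModularGroup (S T)
open scoped Real MatrixGroups ModularForm

section JacobiSlash

lemma denom_SL_mul (γ γ' : SL(2, ℤ)) (τ : ℍ) :
    denom (γ * γ' : SL(2, ℤ)) τ = denom γ (γ' • τ : ℍ) * denom γ' τ := by
  simpa [σ, ModularGroup.sl_moeb] using denom_cocycle_σ (γ : GL (Fin 2) ℝ) (γ' : GL (Fin 2) ℝ) τ

lemma jacobi_cocycle (γ γ' : SL(2, ℤ)) (τ : ℍ) (z : ℂ) :
    ((γ * γ') 1 0 : ℂ) * z ^ 2 / denom (γ * γ' : SL(2, ℤ)) τ =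
      (γ' 1 0 : ℂ) * z ^ 2 / denom γ' τ +
        (γ 1 0 : ℂ) * (z / denom γ' τ) ^ 2 / denom γ (γ' • τ : ℍ) := by
  have hdet : (γ' 0 0 : ℂ) * γ' 1 1 - γ' 0 1 * γ' 1 0 = 1 := by
    exact_mod_cast (Matrix.det_fin_two γ'.1).symm.trans γ'.2
  have hj : denom γ (γ' • τ : ℍ) ≠ 0 := denom_ne_zero _ _
  have hj' : denom γ' τ ≠ 0 := denom_ne_zero _ _
  have hlower : ((γ * γ') 1 0 : ℂ) * denom γ' τ =
      (γ' 1 0 : ℂ) * (denom γ (γ' • τ : ℍ) * denom γ' τ) + (γ 1 0 : ℂ) := by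
    rw [← denom_SL_mul]
    simp only [ModularGroup.denom_apply, Matrix.SpecialLinearGroup.coe_mul, Matrix.mul_apply,
      Fin.sum_univ_two]
    push_cast
    linear_combination (γ 1 0 : ℂ) * hdet
  rw [denom_SL_mul]
  field_simp
  linear_combination z ^ 2 * hlower

/-- The Jacobi slash action of `SL₂(ℤ)` on functions `ψ(τ, z)`. The parameter is the pair
(weight, index), and the weight convention is that of `ModularForm.slash`. -/
noncomputable instance jacobiSlashAction : SlashAction (ℤ × ℤ) SL(2, ℤ) (ℍ → ℂ → ℂ) where
  map km γ ψ τ z :=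
    cexp (-2 * π * I * km.2 * (γ 1 0 * z ^ 2 / denom γ τ)) * ψ (γ • τ) (z / denom γ τ) *
      denom γ τ ^ (-km.1)
  zero_slash _ _ := by ext; simp
  slash_one _ _ := by ext; simp
  slash_mul km γ γ' ψ := by
    ext τ z
    rw [jacobi_cocycle, mul_add, Complex.exp_add, denom_SL_mul, mul_zpow, mul_smul,
      mul_comm (denom γ _), ← div_div]
    ring
  add_slash _ _ _ _ := by ext; simp [mul_add, add_mul]

variable (k l m : ℤ) (γ : SL(2, ℤ))

lemma jacobi_slash_apply (ψ : ℍ → ℂ → ℂ) (τ : ℍ) (z : ℂ) :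
    (ψ ∣[(k, m)] γ) τ z =
      cexp (-2 * π * I * m * (γ 1 0 * z ^ 2 / denom γ τ)) * ψ (γ • τ) (z / denom γ τ) *
        denom γ τ ^ (-k) :=
  rfl

lemma jacobi_slash_zero_apply (F : ℂ → ℂ → ℂ) (τ : ℍ) (z : ℂ) :
    ((fun τ : ℍ ↦ F τ) ∣[((0 : ℤ), m)] γ) τ z =
      cexp (-2 * m * γ 1 0 * π * I * z ^ 2 / (γ 1 0 * τ + γ 1 1)) *
        F ((γ 0 0 * τ + γ 0 1) / (γ 1 0 * τ + γ 1 1)) (z / (γ 1 0 * τ + γ 1 1)) := by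
  rw [jacobi_slash_apply, coe_specialLinearGroup_apply, ModularGroup.denom_apply, neg_zero,
    zpow_zero, mul_one]
  simp only [algebraMap_int_eq, eq_intCast, ofReal_intCast]
  ring_nf

lemma jacobi_slash_mul (f : ℍ → ℂ) (ψ : ℍ → ℂ → ℂ) :
    (fun τ z ↦ f τ * ψ τ z) ∣[(k + l, m)] γ =
      fun τ z ↦ (f ∣[k] γ) τ * (ψ ∣[(l, m)] γ) τ z := by
  ext τ z
  rw [jacobi_slash_apply, jacobi_slash_apply, ModularForm.SL_slash_apply, neg_add,
    zpow_add₀ (denom_ne_zero _ _)]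
  ring

lemma jacobi_slash_T (ψ : ℍ → ℂ → ℂ) (τ : ℍ) (z : ℂ) :
    (ψ ∣[(k, m)] T) τ z = ψ ((1 : ℝ) +ᵥ τ) z := by
  rw [jacobi_slash_apply, modular_T_smul]
  simp [ModularGroup.denom_apply, ModularGroup.coe_T]

lemma jacobi_slash_S (ψ : ℍ → ℂ → ℂ) (τ : ℍ) (z : ℂ) :
    (ψ ∣[(k, m)] S) τ z =
      cexp (-2 * π * I * m * (z ^ 2 / τ)) * ψ (S • τ) (z / τ) * τ ^ (-k) := by
  simp [jacobi_slash_apply, ModularGroup.coe_S]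

end JacobiSlash

section ModularSlash

variable {k : ℤ}

lemma pow_slash (f : ℍ → ℂ) (n : ℕ) (γ : SL(2, ℤ)) : (f ^ n) ∣[n * k] γ = (f ∣[k] γ) ^ n := by
  ext τ
  simp [ModularForm.SL_slash_apply, mul_pow, mul_comm (n : ℤ), zpow_mul]

lemma inv_slash (f : ℍ → ℂ) (γ : SL(2, ℤ)) : f⁻¹ ∣[-k] γ = (f ∣[k] γ)⁻¹ := by
  ext τ
  simp [ModularForm.SL_slash_apply, mul_comm]

variable {f : ℍ → ℂ}

lemma slash_neg_of_even (hk : Even k) (γ : SL(2, ℤ)) : f ∣[k] (-γ) = f ∣[k] γ := by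
  ext τ
  have hdenom : denom (-γ : SL(2, ℤ)) τ = -denom γ τ := by
    rw [ModularGroup.denom_apply, ModularGroup.denom_apply, Matrix.SpecialLinearGroup.coe_neg]
    simp only [Matrix.neg_apply, Int.cast_neg]
    ring
  rw [ModularForm.SL_slash_apply, ModularForm.SL_slash_apply, ModularGroup.SL_neg_smul, hdenom,
    hk.neg.neg_zpow]

lemma slash_zpow {γ : SL(2, ℤ)} {c : ℂ} (hc : c ≠ 0) (h : f ∣[k] γ = c • f) (n : ℤ) :
    f ∣[k] (γ ^ n) = c ^ n • f := by
  have hinv : f ∣[k] γ⁻¹ = c⁻¹ • f := by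
    rw [eq_inv_smul_iff₀ hc, ← ModularForm.SL_smul_slash, ← h, ← SlashAction.slash_mul,
      mul_inv_cancel, SlashAction.slash_one]
  induction n with
  | zero => simp
  | succ n ih =>
    rw [zpow_add_one, SlashAction.slash_mul, ih, ModularForm.SL_smul_slash, h, smul_smul,
      zpow_add_one₀ hc]
  | pred n ih =>
    rw [zpow_sub_one, SlashAction.slash_mul, ih, ModularForm.SL_smul_slash, hinv, smul_smul,
      zpow_sub_one₀ hc]

/-- The lower unipotent matrix `(1, 0; m, 1)`; it represents `M_{1/6}` for `m = 6`. -/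
def lowerUnipotent (m : ℤ) : SL(2, ℤ) := ⟨!![1, 0; m, 1], by simp⟩

lemma lowerUnipotent_eq_conj (m : ℤ) : lowerUnipotent m = S * T ^ (-m) * S⁻¹ := by
  ext i j
  fin_cases i <;> fin_cases j <;>
    simp [lowerUnipotent, ModularGroup.coe_T_zpow, ModularGroup.coe_S, Matrix.mul_apply,
      Matrix.SpecialLinearGroup.coe_inv, Matrix.adjugate_fin_two, -zpow_neg]

lemma denom_lowerUnipotent (m : ℤ) (τ : ℍ) : denom (lowerUnipotent m) τ = m * τ + 1 := by
  rw [ModularGroup.denom_apply]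
  simp [lowerUnipotent]

lemma coe_lowerUnipotent_smul (m : ℤ) (τ : ℍ) :
    ((lowerUnipotent m • τ : ℍ) : ℂ) = τ / (m * τ + 1) := by
  rw [coe_specialLinearGroup_apply]
  simp [lowerUnipotent]

lemma slash_lowerUnipotent {a c : ℂ} (ha : a ≠ 0) (hc : c ≠ 0) (hS : f ∣[k] S = a • f)
    (hT : f ∣[k] T = c • f) (m : ℤ) : f ∣[k] lowerUnipotent m = c ^ (-m) • f := by
  have hS' : f ∣[k] S⁻¹ = a⁻¹ • f := by simpa using slash_zpow ha hS (-1)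
  rw [lowerUnipotent_eq_conj, SlashAction.slash_mul, SlashAction.slash_mul, hS,
    ModularForm.SL_smul_slash, slash_zpow hc hT, ModularForm.SL_smul_slash,
    ModularForm.SL_smul_slash, hS', smul_comm (c ^ (-m)), smul_inv_smul₀ ha]

lemma slash_lowerUnipotent_dilate {F : ℂ → ℂ} {c : ℂ} {m : ℤ} (n : ℕ) [NeZero n]
    (hF : (fun τ : ℍ ↦ F τ) ∣[k] lowerUnipotent m = c • fun τ : ℍ ↦ F τ) :
    (fun τ : ℍ ↦ F (n * τ)) ∣[k] lowerUnipotent (n * m) = c • fun τ : ℍ ↦ F (n * τ) := by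
  ext τ
  have hn : 0 < (n : ℝ) := by exact_mod_cast NeZero.pos n
  obtain ⟨τ', hτ'⟩ : ∃ τ' : ℍ, (τ' : ℂ) = n * τ :=
    ⟨⟨n * τ, by simpa using mul_pos hn τ.im_pos⟩, rfl⟩
  have h := congrFun hF τ'
  simp only [ModularForm.SL_slash_apply, Pi.smul_apply, smul_eq_mul, coe_lowerUnipotent_smul,
    denom_lowerUnipotent, Int.cast_mul, Int.cast_natCast] at h ⊢
  rw [hτ'] at h
  rw [← h]
  ring_nf

end ModularSlash

lemma coe_S_smul (τ : ℍ) : ((S • τ : ℍ) : ℂ) = -1 / τ := by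
  rw [modular_S_smul]
  simp [neg_div, inv_neg]

section Eta

lemma Eta_eq_eta (τ : ℂ) : Eta τ = ModularForm.eta τ := by
  simp only [Eta, ModularForm.eta, ModularForm.eta_q_eq_cexp, Function.Periodic.qParam]
  congr 2
  push_cast
  ring

lemma Eta_add_natCast (τ : ℂ) (n : ℕ) : Eta (τ + n) = cexp (π * I / 12) ^ n * Eta τ := by
  have hq (j : ℕ) : cexp (2 * π * I * ((j : ℂ) + 1) * (τ + n)) =
      cexp (2 * π * I * ((j : ℂ) + 1) * τ) :=
    exp_eq_exp_iff_exists_int.mpr ⟨(j + 1) * n, by push_cast; ring⟩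
  simp_rw [Eta, hq]
  rw [← mul_assoc, ← Complex.exp_nat_mul, ← Complex.exp_add]
  ring_nf

/-- The function `η(nτ)²`, which transforms with weight `1`. Squaring removes the square root from
the transformation law of `η` under `S`. -/
noncomputable def etaSq (n : ℕ) (τ : ℍ) : ℂ := Eta (n * τ) ^ 2

lemma etaSq_slash_T (n : ℕ) : etaSq n ∣[(1 : ℤ)] T = cexp (π * I / 6) ^ n • etaSq n := by
  ext τ
  have hζ : cexp (π * I / 6) = cexp (π * I / 12) ^ 2 := by
    rw [← Complex.exp_nat_mul]
    ring_nf
  have hT : (n : ℂ) * (T • τ : ℍ) = n * τ + n := by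
    rw [modular_T_smul, coe_vadd]
    push_cast
    ring
  have hdenom : denom T τ = 1 := by simp [ModularGroup.denom_apply, ModularGroup.coe_T]
  rw [ModularForm.SL_slash_apply, Pi.smul_apply, smul_eq_mul, etaSq, etaSq, hT,
    Eta_add_natCast, hζ, hdenom, one_zpow]
  ring

lemma etaSq_one_slash_S : etaSq 1 ∣[(1 : ℤ)] S = -I • etaSq 1 := by
  ext τ
  have hEta : Eta (-1 / τ) = (sqrt I)⁻¹ * (sqrt τ * Eta τ) := by
    simpa only [Eta_eq_eta, Function.comp_apply, Pi.smul_apply, Pi.mul_apply, smul_eq_mul] using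
      ModularForm.eta_comp_eq_csqrt_I_inv τ.im_pos
  have hsqrt (w : ℂ) : sqrt w ^ 2 = w := by simp [Complex.sqrt]
  have hτ : (τ : ℂ) ≠ 0 := τ.ne_zero
  rw [ModularForm.SL_slash_apply, Pi.smul_apply, etaSq, etaSq, coe_S_smul, ModularGroup.denom_S,
    Nat.cast_one, one_mul, one_mul, hEta, mul_pow, mul_pow, inv_pow, hsqrt, hsqrt, inv_I,
    zpow_neg_one, smul_eq_mul]
  field_simp

lemma etaSq_slash_lowerUnipotent (n : ℕ) [NeZero n] (m : ℤ) :
    etaSq n ∣[(1 : ℤ)] lowerUnipotent (n * m) = cexp (π * I / 6) ^ (-m) • etaSq n := by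
  have h := slash_lowerUnipotent (neg_ne_zero.mpr I_ne_zero) (by simp) etaSq_one_slash_S
    (etaSq_slash_T 1) m
  have hEta : etaSq 1 = fun τ : ℍ ↦ Eta τ ^ 2 := by ext; simp [etaSq]
  rw [pow_one, hEta] at h
  exact slash_lowerUnipotent_dilate (F := fun w ↦ Eta w ^ 2) n h

/-- The weight `2` eta quotient `η(τ)² η(2τ)² η(3τ)² / η(6τ)²` occurring in `Z6b`. -/
noncomputable def etaQuotient : ℍ → ℂ := etaSq 1 * etaSq 2 * etaSq 3 / etaSq 6

lemma etaQuotient_slash (γ : SL(2, ℤ)) :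
    etaQuotient ∣[(2 : ℤ)] γ = etaSq 1 ∣[(1 : ℤ)] γ * etaSq 2 ∣[(1 : ℤ)] γ *
      etaSq 3 ∣[(1 : ℤ)] γ / etaSq 6 ∣[(1 : ℤ)] γ := by
  rw [← ModularForm.mul_slash_SL2, ← ModularForm.mul_slash_SL2, ← ModularForm.div_slash_SL2]
  rfl

lemma etaQuotient_slash_T : etaQuotient ∣[(2 : ℤ)] T = etaQuotient := by
  rw [etaQuotient_slash]
  simp only [etaSq_slash_T]
  ext τ
  simp only [etaQuotient, Pi.mul_apply, Pi.div_apply, Pi.smul_apply, smul_eq_mul]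
  have hζ : cexp (π * I / 6) ≠ 0 := Complex.exp_ne_zero _
  field_simp

lemma etaQuotient_slash_lowerUnipotent (m : ℤ) :
    etaQuotient ∣[(2 : ℤ)] lowerUnipotent (6 * m) = cexp (π * I / 3) ^ m • etaQuotient := by
  have hslash (n : ℕ) [NeZero n] {l : ℤ} (hl : n * l = 6 * m) :
      etaSq n ∣[(1 : ℤ)] lowerUnipotent (6 * m) = cexp (π * I / 6) ^ (-l) • etaSq n :=
    hl ▸ etaSq_slash_lowerUnipotent n l
  have hmult : cexp (π * I / 6) ^ (-(6 * m)) * cexp (π * I / 6) ^ (-(3 * m)) *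
      cexp (π * I / 6) ^ (-(2 * m)) / cexp (π * I / 6) ^ (-m) = cexp (π * I / 3) ^ m := by
    simp only [← Complex.exp_int_mul, ← Complex.exp_add, ← Complex.exp_sub]
    exact exp_eq_exp_iff_exists_int.mpr ⟨-m, by push_cast; ring⟩
  rw [etaQuotient_slash, hslash 1 (l := 6 * m) (by simp),
    hslash 2 (l := 3 * m) (by push_cast; ring), hslash 3 (l := 2 * m) (by push_cast; ring),
    hslash 6 (l := m) (by simp), ← hmult]
  ext τ
  simp only [etaQuotient, Pi.mul_apply, Pi.div_apply, Pi.smul_apply, smul_eq_mul]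
  field_simp

end Eta

section Theta

lemma θ₁_eq_jacobiTheta₂ (τ z : ℂ) :
    θ₁ τ z = -I * (cexp (π * I * τ / 4 + π * I * z) * jacobiTheta₂ (z + 1 / 2 + τ / 2) τ) := by
  rw [θ₁, jacobiTheta₂, ← tsum_mul_left (a := cexp _)]
  congr 1
  refine tsum_congr fun n ↦ ?_
  rw [jacobiTheta₂_term, ← exp_pi_mul_I, ← Complex.exp_int_mul, ← Complex.exp_add,
    ← Complex.exp_add]
  ring_nf

lemma θ₁_add_one (τ z : ℂ) : θ₁ (τ + 1) z = cexp (π * I / 4) * θ₁ τ z := by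
  rw [θ₁, θ₁, mul_left_comm, ← tsum_mul_left (a := cexp _)]
  congr 1
  refine tsum_congr fun n ↦ ?_
  rw [mul_left_comm, ← Complex.exp_add]
  congr 1
  obtain ⟨j, hj⟩ := Int.even_mul_succ_self n
  have hj' : (n : ℂ) * (n + 1) = j + j := by exact_mod_cast hj
  exact exp_eq_exp_iff_exists_int.mpr ⟨j, by linear_combination (π * I) * hj'⟩

lemma θ₁_neg_one_div {τ : ℂ} (hτ : τ ≠ 0) (z : ℂ) :
    θ₁ (-1 / τ) (z / τ) =
      -I * (-I * τ) ^ (1 / 2 : ℂ) * cexp (π * I * z ^ 2 / τ) * θ₁ τ z := by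
  have hperiod : jacobiTheta₂ (z + 1 / 2 + τ / 2) τ = jacobiTheta₂ (z - 1 / 2 + τ / 2) τ := by
    rw [← jacobiTheta₂_add_left (z - 1 / 2 + τ / 2)]
    ring_nf
  have harg : z / τ + 1 / 2 + -1 / τ / 2 = (z - 1 / 2 + τ / 2) / τ := by
    field_simp
    ring
  have hroot : (-I * τ) ^ (1 / 2 : ℂ) ≠ 0 := by simp [hτ]
  have hexp : cexp (π * I * (-1 / τ) / 4 + π * I * (z / τ)) =
      -I * cexp (π * I * z ^ 2 / τ) * cexp (π * I * τ / 4 + π * I * z) *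
        cexp (-π * I * (z - 1 / 2 + τ / 2) ^ 2 / τ) := by
    rw [← exp_neg_pi_div_two_mul_I, ← Complex.exp_add, ← Complex.exp_add, ← Complex.exp_add]
    congr 1
    field_simp
    ring
  rw [θ₁_eq_jacobiTheta₂, θ₁_eq_jacobiTheta₂, harg, hperiod,
    jacobiTheta₂_functional_equation (z - 1 / 2 + τ / 2) τ, hexp]
  field_simp [hroot]

lemma θ₁_sq_slash_S :
    (fun (τ : ℍ) z ↦ θ₁ τ z ^ 2) ∣[((1 : ℤ), (1 : ℤ))] S = I • fun (τ : ℍ) z ↦ θ₁ τ z ^ 2 := by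
  ext τ z
  have hτ : (τ : ℂ) ≠ 0 := τ.ne_zero
  have hexp : cexp (-2 * π * I * (1 : ℤ) * (z ^ 2 / τ)) * cexp (π * I * z ^ 2 / τ) ^ 2 = 1 := by
    rw [← Complex.exp_nat_mul, ← Complex.exp_add, Complex.exp_eq_one_iff]
    exact ⟨0, by push_cast; ring⟩
  have hroot : ((-I * τ) ^ (1 / 2 : ℂ)) ^ 2 = -I * τ := by simp
  rw [jacobi_slash_S, coe_S_smul, θ₁_neg_one_div hτ, mul_pow, mul_pow, mul_pow, hroot, neg_sq,
    I_sq, zpow_neg_one, Pi.smul_apply, Pi.smul_apply, smul_eq_mul]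
  linear_combination I * θ₁ τ z ^ 2 * hexp + I * θ₁ τ z ^ 2 *
    cexp (-2 * π * I * (1 : ℤ) * (z ^ 2 / τ)) * cexp (π * I * z ^ 2 / τ) ^ 2 * mul_inv_cancel₀ hτ

lemma θ₁_sq_slash_T :
    (fun (τ : ℍ) z ↦ θ₁ τ z ^ 2) ∣[((1 : ℤ), (1 : ℤ))] T = I • fun (τ : ℍ) z ↦ θ₁ τ z ^ 2 := by
  ext τ z
  have hI : cexp (π * I / 4) ^ 2 = I := by
    rw [← Complex.exp_nat_mul, show ((2 : ℕ) : ℂ) * (π * I / 4) = π / 2 * I by push_cast; ring,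
      exp_pi_div_two_mul_I]
  rw [jacobi_slash_T, coe_vadd, ofReal_one, add_comm, θ₁_add_one, mul_pow, hI]
  rfl

lemma φm21_slash_eq_self_of_multiplier {γ : SL(2, ℤ)} {c : ℂ} (hc : c ≠ 0)
    (hη : etaSq 1 ∣[(1 : ℤ)] γ = c • etaSq 1)
    (hθ : (fun (τ : ℍ) z ↦ θ₁ τ z ^ 2) ∣[((1 : ℤ), (1 : ℤ))] γ =
      c ^ 3 • fun (τ : ℍ) z ↦ θ₁ τ z ^ 2) :
    (fun τ : ℍ ↦ φm21 τ) ∣[((-2 : ℤ), (1 : ℤ))] γ = fun τ : ℍ ↦ φm21 τ := by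
  have hφ : (fun τ : ℍ ↦ φm21 τ) = fun (τ : ℍ) z ↦ (etaSq 1 ^ 3)⁻¹ τ * θ₁ τ z ^ 2 := by
    ext τ z
    simp only [φm21, etaSq, Pi.inv_apply, Pi.pow_apply, Nat.cast_one, one_mul]
    ring
  have hη₃ : (etaSq 1 ^ 3) ∣[(3 : ℤ)] γ = c ^ 3 • etaSq 1 ^ 3 := by
    rw [← smul_pow, ← hη, ← pow_slash, Nat.cast_ofNat, mul_one]
  rw [hφ, show (-2 : ℤ) = -3 + 1 by norm_num, jacobi_slash_mul, inv_slash, hη₃, hθ]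
  ext τ z
  simp only [Pi.inv_apply, Pi.smul_apply, smul_eq_mul]
  field_simp

lemma φm21_slash_S : (fun τ : ℍ ↦ φm21 τ) ∣[((-2 : ℤ), (1 : ℤ))] S = fun τ : ℍ ↦ φm21 τ := by
  have hI : (-I) ^ 3 = I := by rw [Odd.neg_pow (by decide), I_pow_three, neg_neg]
  refine φm21_slash_eq_self_of_multiplier (neg_ne_zero.mpr I_ne_zero) etaSq_one_slash_S ?_
  rw [hI, θ₁_sq_slash_S]

lemma φm21_slash_T : (fun τ : ℍ ↦ φm21 τ) ∣[((-2 : ℤ), (1 : ℤ))] T = fun τ : ℍ ↦ φm21 τ := by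
  have hI : cexp (π * I / 6) ^ 3 = I := by
    rw [← Complex.exp_nat_mul, show ((3 : ℕ) : ℂ) * (π * I / 6) = π / 2 * I by push_cast; ring,
      exp_pi_div_two_mul_I]
  refine φm21_slash_eq_self_of_multiplier (Complex.exp_ne_zero (π * I / 6)) ?_ ?_
  · rw [etaSq_slash_T, pow_one]
  · rw [hI, θ₁_sq_slash_T]

lemma φm21_slash (γ : SL(2, ℤ)) :
    (fun τ : ℍ ↦ φm21 τ) ∣[((-2 : ℤ), (1 : ℤ))] γ = fun τ : ℍ ↦ φm21 τ := by
  have hγ : γ ∈ Subgroup.closure {S, T} := by simp [SpecialLinearGroup.SL2Z_generators]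
  induction hγ using Subgroup.closure_induction with
  | mem γ hγ =>
    rcases hγ with rfl | rfl
    exacts [φm21_slash_S, φm21_slash_T]
  | one => exact SlashAction.slash_one _ _
  | mul γ γ' _ _ ih ih' => rw [SlashAction.slash_mul, ih, ih']
  | inv γ _ ih => rw [← ih, ← SlashAction.slash_mul, mul_inv_cancel, SlashAction.slash_one, ih]

end Theta

section EllipticGenus

lemma Z6b_slash_of_etaQuotient_slash {γ : SL(2, ℤ)} {c : ℂ}
    (h : etaQuotient ∣[(2 : ℤ)] γ = c • etaQuotient) :
    (fun τ : ℍ ↦ Z6b τ) ∣[((0 : ℤ), (1 : ℤ))] γ = c • fun τ : ℍ ↦ Z6b τ := by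
  have hZ : (fun τ : ℍ ↦ Z6b τ) = fun (τ : ℍ) z ↦ ((2 : ℂ) • etaQuotient) τ * φm21 τ z := by
    ext τ z
    simp [Z6b, etaQuotient, etaSq]
  rw [hZ, show (0 : ℤ) = 2 + -2 by norm_num, jacobi_slash_mul, ModularForm.SL_smul_slash, h,
    φm21_slash]
  ext τ z
  simp only [Pi.smul_apply, smul_eq_mul]
  ring

/-- The matrix `M_{5/6}`, whose action sends `∞` to the cusp `5/6`. -/
def M₅₆ : SL(2, ℤ) := ⟨!![5, -1; 6, -1], by simp⟩

lemma M₅₆_eq_neg_T_mul_lowerUnipotent : M₅₆ = -(T * lowerUnipotent (6 * -1)) := by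
  apply Subtype.ext
  rw [Matrix.SpecialLinearGroup.coe_neg, Matrix.SpecialLinearGroup.coe_mul, ModularGroup.coe_T]
  simp [M₅₆, lowerUnipotent]

lemma jacobi_slash_lowerUnipotent_six_apply (F : ℂ → ℂ → ℂ) (τ : ℍ) (z : ℂ) :
    ((fun τ : ℍ ↦ F τ) ∣[((0 : ℤ), (1 : ℤ))] lowerUnipotent 6) τ z =
      cexp (-12 * π * I * z ^ 2 / (6 * τ + 1)) * F (τ / (6 * τ + 1)) (z / (6 * τ + 1)) := by
  rw [jacobi_slash_zero_apply]
  norm_num [lowerUnipotent]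

lemma jacobi_slash_M₅₆_apply (F : ℂ → ℂ → ℂ) (τ : ℍ) (z : ℂ) :
    ((fun τ : ℍ ↦ F τ) ∣[((0 : ℤ), (1 : ℤ))] M₅₆) τ z =
      cexp (-12 * π * I * z ^ 2 / (6 * τ - 1)) *
        F ((5 * τ - 1) / (6 * τ - 1)) (z / (6 * τ - 1)) := by
  rw [jacobi_slash_zero_apply]
  norm_num [M₅₆, sub_eq_add_neg]

lemma etaQuotient_slash_M₅₆ :
    etaQuotient ∣[(2 : ℤ)] M₅₆ = (cexp (π * I / 3))⁻¹ • etaQuotient := by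
  rw [M₅₆_eq_neg_T_mul_lowerUnipotent, slash_neg_of_even even_two,
    SlashAction.slash_mul, etaQuotient_slash_T, etaQuotient_slash_lowerUnipotent, zpow_neg_one]

lemma exp_pi_div_three_add_inv : cexp (π * I / 3) + (cexp (π * I / 3))⁻¹ = 1 := by
  have hcos : Complex.cos (π / 3) = 1 / 2 := by
    rw [← ofReal_ofNat 3, ← ofReal_div, ← ofReal_cos, Real.cos_pi_div_three]
    norm_num
  rw [← Complex.exp_neg, mul_div_right_comm, ← neg_mul, ← Complex.two_cos, hcos]
  norm_num

end EllipticGenus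

/-- The sum of the slashes of Z^{6⁴} by M_{1/6} = (1,0;6,1) and M_{5/6} = (5,−1;6,−1)
equals +Z^{6⁴}. -/
theorem Z6b_slash_cusps (τ : ℂ) (hτ : 0 < τ.im) (z : ℂ) :
    Complex.exp (-12 * Real.pi * I * z ^ 2 / (6 * τ + 1)) *
          Z6b (τ / (6 * τ + 1)) (z / (6 * τ + 1)) +
        Complex.exp (-12 * Real.pi * I * z ^ 2 / (6 * τ - 1)) *
          Z6b ((5 * τ - 1) / (6 * τ - 1)) (z / (6 * τ - 1)) =
      Z6b τ z := by
  lift τ to ℍ using hτ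
  have h₁₆ : (fun τ : ℍ ↦ Z6b τ) ∣[((0 : ℤ), (1 : ℤ))] lowerUnipotent 6 =
      cexp (π * I / 3) • fun τ : ℍ ↦ Z6b τ :=
    Z6b_slash_of_etaQuotient_slash (by simpa using etaQuotient_slash_lowerUnipotent 1)
  have h₅₆ : (fun τ : ℍ ↦ Z6b τ) ∣[((0 : ℤ), (1 : ℤ))] M₅₆ =
      (cexp (π * I / 3))⁻¹ • fun τ : ℍ ↦ Z6b τ :=
    Z6b_slash_of_etaQuotient_slash etaQuotient_slash_M₅₆
  rw [← jacobi_slash_lowerUnipotent_six_apply Z6b, ← jacobi_slash_M₅₆_apply Z6b, h₁₆, h₅₆,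
    ← Pi.add_apply, ← Pi.add_apply, ← add_smul, exp_pi_div_three_add_inv, one_smul]
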